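/- arXiv:2601.04411 — 6 statements merged into one kernel-verified Lean document; each statement's English description precedes it below -/
import Mathlib

section
/- Let η > 0 and p₀ ∈ (0,1). Define φ(p) := (2p − 1)/√(p(1−p)) and p(t) := 1/2 + (1/2)·(φ(p₀) − (η/2)·t) / √(4 + (φ(p₀) − (η/2)·t)²) for t ≥ 0. Then p is differentiable, p(0) = p₀, p(t) ∈ (0,1) for all t ≥ 0, p solves the ODE dp/dt = −η·p(t)^{3/2}·(1−p(t))^{3/2}, and the late-time asymptotic p(t) ~ 4/(η²·t²) holds as t → ∞, i.e. t²·p(t) → 4/η². -/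
/-- The explicit solution of the noise-free GRPO mean-field
ODE `dp/dt = −η·p^{3/2}(1−p)^{3/2}`: with `φ(p) = (2p−1)/√(p(1−p))` and
`p(t) = 1/2 + (1/2)·(φ(p₀) − (η/2)t)/√(4 + (φ(p₀) − (η/2)t)²)`, the function
`p` satisfies `p(0) = p₀`, stays in `(0,1)` for `t ≥ 0`, is differentiable and
solves the ODE for `t ≥ 0`, and obeys the late-time asymptotic
`t²·p(t) → 4/η²` as `t → ∞`. -/
theorem grpo_noise_free_solution (η p₀ : ℝ) (hη : 0 < η)
    (hp₀ : p₀ ∈ Set.Ioo (0:ℝ) 1)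
    (φ : ℝ → ℝ) (hφ : ∀ x, φ x = (2 * x - 1) / Real.sqrt (x * (1 - x)))
    (p : ℝ → ℝ)
    (hpdef : ∀ t, p t = 1 / 2 + (1 / 2) *
      ((φ p₀ - (η / 2) * t) / Real.sqrt (4 + (φ p₀ - (η / 2) * t) ^ 2))) :
    p 0 = p₀ ∧
    (∀ t ≥ (0:ℝ), p t ∈ Set.Ioo (0:ℝ) 1) ∧
    (∀ t ≥ (0:ℝ), HasDerivAt p
      (-η * p t ^ ((3:ℝ) / 2) * (1 - p t) ^ ((3:ℝ) / 2)) t) ∧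
    Filter.Tendsto (fun t => t ^ 2 * p t) Filter.atTop (nhds (4 / η ^ 2)) := by
  obtain ⟨h0, h1⟩ := hp₀
  have hspos : ∀ u : ℝ, 0 < Real.sqrt (4 + u ^ 2) := fun u => Real.sqrt_pos.mpr (by positivity)
  have hssq : ∀ u : ℝ, Real.sqrt (4 + u ^ 2) ^ 2 = 4 + u ^ 2 :=
    fun u => Real.sq_sqrt (by positivity)
  have hlt : ∀ u : ℝ, |u| < Real.sqrt (4 + u ^ 2) := fun u => by
    apply Real.lt_sqrt_of_sq_lt
    rw [sq_abs]
    linarith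
  have hmem : ∀ t, p t ∈ Set.Ioo (0:ℝ) 1 := by
    intro t
    rw [hpdef]
    generalize φ p₀ - (η / 2) * t = u
    have ha := abs_lt.mp (hlt u)
    have hs := hspos u
    have e1 : -1 < u / Real.sqrt (4 + u ^ 2) := by
      rw [lt_div_iff₀ hs]; linarith [ha.1]
    have e2 : u / Real.sqrt (4 + u ^ 2) < 1 := by
      rw [div_lt_iff₀ hs]; linarith [ha.2]
    constructor <;> linarith
  refine ⟨?_, fun t _ => hmem t, ?_, ?_⟩
  · have hr2 : 0 < p₀ * (1 - p₀) := mul_pos h0 (by linarith)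
    have hr := Real.sqrt_pos.mpr hr2
    have hsq := Real.sq_sqrt hr2.le
    rw [hpdef, hφ]
    set r := Real.sqrt (p₀ * (1 - p₀)) with hrdef
    have : Real.sqrt (4 + ((2 * p₀ - 1) / r - η / 2 * 0) ^ 2) = 1 / r := by
      rw [Real.sqrt_eq_iff_mul_self_eq_of_pos (by positivity)]
      field_simp
      rw [hsq]
      ring
    rw [this]
    field_simp
    ring
  · intro t _
    obtain ⟨hp, hp1⟩ := hmem t
    have hu : HasDerivAt (fun t => φ p₀ - (η / 2) * t) (-(η / 2)) t := by
      simpa using ((hasDerivAt_id t).const_mul (η / 2)).const_sub (φ p₀)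
    have hs := ((hu.pow 2).const_add 4).sqrt
      (by simp only [Pi.pow_apply]; positivity)
    have hd := ((hu.div hs (hspos _).ne').const_mul (1 / 2)).const_add (1 / 2)
    have hpe : p = fun t => 1 / 2 + (1 / 2) *
      ((φ p₀ - (η / 2) * t) / Real.sqrt (4 + (φ p₀ - (η / 2) * t) ^ 2)) := funext hpdef
    have key : p t ^ ((3:ℝ) / 2) * (1 - p t) ^ ((3:ℝ) / 2)
        = (1 / Real.sqrt (4 + (φ p₀ - (η / 2) * t) ^ 2)) ^ 3 := by
      rw [← Real.mul_rpow hp.le (by linarith)]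
      have : p t * (1 - p t) = (1 / Real.sqrt (4 + (φ p₀ - (η / 2) * t) ^ 2)) ^ 2 := by
        rw [hpdef]
        have h2 := hssq (φ p₀ - (η / 2) * t)
        have h3 := hspos (φ p₀ - (η / 2) * t)
        generalize φ p₀ - (η / 2) * t = u at *
        field_simp
        nlinarith
      rw [this, ← Real.rpow_natCast, ← Real.rpow_mul (by positivity), ← Real.rpow_natCast]
      norm_num
    rw [mul_assoc, key]
    refine HasDerivAt.congr_deriv (hd.congr_of_eventuallyEq
      (Filter.Eventually.of_forall fun x => hpdef x)) ?_
    have h2 := hssq (φ p₀ - (η / 2) * t)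
    have h3 := hspos (φ p₀ - (η / 2) * t)
    simp only [Pi.pow_apply]
    generalize φ p₀ - (η / 2) * t = u at *
    generalize Real.sqrt (4 + u ^ 2) = s at *
    have h4 : u ^ 2 = s ^ 2 - 4 := by linarith
    field_simp
    norm_num
    ring_nf
    simp only [h4]
    ring
  · have hut : Filter.Tendsto (fun t : ℝ => φ p₀ * t⁻¹ - η / 2) Filter.atTop
        (nhds (-(η / 2))) := by
      simpa using (tendsto_inv_atTop_zero.const_mul (φ p₀)).sub_const (η / 2)
    have hst : Filter.Tendsto
        (fun t : ℝ => Real.sqrt (4 * t⁻¹ ^ 2 + (φ p₀ * t⁻¹ - η / 2) ^ 2)) Filter.atTop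
        (nhds (η / 2)) := by
      have := (((tendsto_inv_atTop_zero (𝕜 := ℝ)).pow 2).const_mul 4).add (hut.pow 2)
      have := this.sqrt
      simpa [Real.sqrt_sq (by positivity : (0:ℝ) ≤ η / 2)] using this
    have hlim := (tendsto_const_nhds (x := (2:ℝ))).div (hst.mul (hst.sub hut)) (by
      have : η / 2 * (η / 2 - -(η / 2)) = η ^ 2 / 2 := by ring
      rw [this]; positivity)
    have e : 2 / (η / 2 * (η / 2 - -(η / 2))) = 4 / η ^ 2 := by
      field_simp
      norm_num
    rw [e] at hlim
    refine hlim.congr' ?_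
    filter_upwards [Filter.eventually_gt_atTop 0] with t ht
    have hs1 : Real.sqrt (4 * t⁻¹ ^ 2 + (φ p₀ * t⁻¹ - η / 2) ^ 2)
        = Real.sqrt (4 + (φ p₀ - (η / 2) * t) ^ 2) / t := by
      rw [← Real.sqrt_sq ht.le, ← Real.sqrt_div (by positivity), Real.sqrt_sq ht.le]
      congr 1
      field_simp
    have hu1 : φ p₀ * t⁻¹ - η / 2 = (φ p₀ - (η / 2) * t) / t := by
      field_simp
    simp only [Pi.div_apply]
    rw [hs1, hu1, hpdef]
    have h2 := hssq (φ p₀ - (η / 2) * t)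
    have h3 := hspos (φ p₀ - (η / 2) * t)
    have h5 := (abs_lt.mp (hlt (φ p₀ - (η / 2) * t))).2
    generalize φ p₀ - (η / 2) * t = u at *
    generalize Real.sqrt (4 + u ^ 2) = s at *
    have h6 : s - u ≠ 0 := by linarith
    rw [← sub_div]
    field_simp
    nlinarith
end

section
/- Let y : [0,∞) → Δ^{K−1} be a differentiable solution of the collision flow dy/dτ = y ⊙ y − s₂(y)·y, and write s₂(τ) := Σ_i y_i(τ)², s₃(τ) := Σ_i y_i(τ)³. Then: (a) the exact identity ds₂/dτ = 2(s₃ − s₂²) = 2·Σ_i y_i (y_i − s₂)² holds, so s₂ is nondecreasing; (b) since s₃ ≤ s₂^{3/2} on the simplex (by the ℓ³–ℓ² norm inequality), one has the upper bound ds₂/dτ ≤ 2(s₂^{3/2} − s₂²); (c) Σ_i (y_i − s₂)² = s₂(K·s₂ − 1), hence ds₂/dτ ≤ 2·(max_i y_i)·s₂·(K·s₂ − 1). -/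
open Finset

/-- Along a solution `y(τ)` of the collision flow
`dy/dτ = y ⊙ y − s₂(y)·y` on the simplex, with `s₂ = Σ y_i²`, `s₃ = Σ y_i³`:
(a) `ds₂/dτ = 2(s₃ − s₂²) = 2·Σ y_i(y_i − s₂)² ≥ 0`, so `s₂` is nondecreasing;
(b) `s₃ ≤ s₂^{3/2}`, hence `ds₂/dτ ≤ 2(s₂^{3/2} − s₂²)`;
(c) `Σ_i (y_i − s₂)² = s₂(K·s₂ − 1)`, hence
`ds₂/dτ ≤ 2·(max_i y_i)·s₂·(K·s₂ − 1)`. -/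
theorem collision_flow_s2_evolution {K : ℕ} (hK : 0 < K)
    (y : ℝ → Fin K → ℝ)
    (hsimp : ∀ τ ≥ (0:ℝ), y τ ∈ stdSimplex ℝ (Fin K))
    (hflow : ∀ τ ≥ (0:ℝ), ∀ i, HasDerivAt (fun u => y u i)
      (y τ i * y τ i - (∑ k, y τ k ^ 2) * y τ i) τ) :
    (∀ τ ≥ (0:ℝ),
      HasDerivAt (fun u => ∑ k, y u k ^ 2)
        (2 * ((∑ k, y τ k ^ 3) - (∑ k, y τ k ^ 2) ^ 2)) τ ∧
      2 * ((∑ k, y τ k ^ 3) - (∑ k, y τ k ^ 2) ^ 2) =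
        2 * ∑ k, y τ k * (y τ k - ∑ j, y τ j ^ 2) ^ 2 ∧
      0 ≤ 2 * ((∑ k, y τ k ^ 3) - (∑ k, y τ k ^ 2) ^ 2) ∧
      (∑ k, y τ k ^ 3) ≤ (∑ k, y τ k ^ 2) ^ ((3:ℝ) / 2) ∧
      2 * ((∑ k, y τ k ^ 3) - (∑ k, y τ k ^ 2) ^ 2) ≤
        2 * ((∑ k, y τ k ^ 2) ^ ((3:ℝ) / 2) - (∑ k, y τ k ^ 2) ^ 2) ∧
      (∑ k, (y τ k - ∑ j, y τ j ^ 2) ^ 2) =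
        (∑ k, y τ k ^ 2) * (K * (∑ k, y τ k ^ 2) - 1) ∧
      2 * ((∑ k, y τ k ^ 3) - (∑ k, y τ k ^ 2) ^ 2) ≤
        2 * (Finset.univ.sup' (Finset.univ_nonempty_iff.mpr ⟨⟨0, hK⟩⟩) (y τ)) *
          ((∑ k, y τ k ^ 2) * (K * (∑ k, y τ k ^ 2) - 1))) ∧
    MonotoneOn (fun τ => ∑ k, y τ k ^ 2) (Set.Ici 0) := by
  have hD : ∀ τ ≥ (0:ℝ), HasDerivAt (fun u => ∑ k, y u k ^ 2)
        (2 * ((∑ k, y τ k ^ 3) - (∑ k, y τ k ^ 2) ^ 2)) τ := by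
    intro τ hτ
    have h := HasDerivAt.fun_sum (u := Finset.univ) (fun i _ => (hflow τ hτ i).fun_pow 2)
    refine h.congr_deriv ?_
    generalize hs : ∑ k, y τ k ^ 2 = s
    have e : ∀ i, ((2:ℕ):ℝ) * y τ i ^ (2 - 1) * (y τ i * y τ i - s * y τ i)
        = 2 * y τ i ^ 3 - 2 * s * y τ i ^ 2 := by
      intro i; norm_num; ring
    simp only [e]
    rw [Finset.sum_sub_distrib, ← Finset.mul_sum, ← Finset.mul_sum, hs]
    ring
  have hE : ∀ τ ≥ (0:ℝ), 2 * ((∑ k, y τ k ^ 3) - (∑ k, y τ k ^ 2) ^ 2) =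
        2 * ∑ k, y τ k * (y τ k - ∑ j, y τ j ^ 2) ^ 2 := by
    intro τ hτ
    have h1 := (hsimp τ hτ).2
    generalize hs : ∑ k, y τ k ^ 2 = s
    have e : ∀ i, y τ i * (y τ i - s) ^ 2
        = y τ i ^ 3 - 2 * s * y τ i ^ 2 + s ^ 2 * y τ i := by
      intro i; ring
    simp only [e]
    rw [Finset.sum_add_distrib, Finset.sum_sub_distrib, ← Finset.mul_sum, ← Finset.mul_sum, hs, h1]
    ring
  have hN : ∀ τ ≥ (0:ℝ), 0 ≤ 2 * ((∑ k, y τ k ^ 3) - (∑ k, y τ k ^ 2) ^ 2) := by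
    intro τ hτ
    rw [hE τ hτ]
    have := Finset.sum_nonneg (s := Finset.univ) (fun k _ =>
      mul_nonneg ((hsimp τ hτ).1 k) (sq_nonneg (y τ k - ∑ j, y τ j ^ 2)))
    linarith
  have hB : ∀ τ ≥ (0:ℝ), (∑ k, y τ k ^ 3) ≤ (∑ k, y τ k ^ 2) ^ ((3:ℝ) / 2) := by
    intro τ hτ
    have hle : ∀ i, y τ i ≤ Real.sqrt (∑ k, y τ k ^ 2) := fun i =>
      Real.le_sqrt_of_sq_le
        (Finset.single_le_sum (f := fun k => y τ k ^ 2) (fun k _ => sq_nonneg _)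
          (Finset.mem_univ i))
    have hs0 : 0 ≤ ∑ k, y τ k ^ 2 := Finset.sum_nonneg (fun k _ => sq_nonneg _)
    have e : (∑ k, y τ k ^ 2) ^ ((3:ℝ) / 2)
        = Real.sqrt (∑ k, y τ k ^ 2) * ∑ k, y τ k ^ 2 := by
      rw [show (3:ℝ) / 2 = 1 / 2 + 1 by norm_num,
        Real.rpow_add_of_nonneg hs0 (by norm_num) (by norm_num), Real.rpow_one,
        Real.sqrt_eq_rpow]
    rw [e, Finset.mul_sum]
    refine Finset.sum_le_sum (fun k _ => ?_)
    have := mul_le_mul_of_nonneg_right (hle k) (sq_nonneg (y τ k))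
    calc y τ k ^ 3 = y τ k * y τ k ^ 2 := by ring
      _ ≤ _ := this
  have hC : ∀ τ ≥ (0:ℝ), (∑ k, (y τ k - ∑ j, y τ j ^ 2) ^ 2) =
        (∑ k, y τ k ^ 2) * (K * (∑ k, y τ k ^ 2) - 1) := by
    intro τ hτ
    have h1 := (hsimp τ hτ).2
    generalize hs : ∑ k, y τ k ^ 2 = s
    have e : ∀ i, (y τ i - s) ^ 2 = y τ i ^ 2 - 2 * s * y τ i + s ^ 2 := by
      intro i; ring
    simp only [e]
    rw [Finset.sum_add_distrib, Finset.sum_sub_distrib, ← Finset.mul_sum, hs, h1]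
    simp
    ring
  refine ⟨fun τ hτ => ⟨hD τ hτ, hE τ hτ, hN τ hτ, hB τ hτ, ?_, hC τ hτ, ?_⟩, ?_⟩
  · have := hB τ hτ
    linarith
  · rw [hE τ hτ, ← hC τ hτ, mul_assoc, Finset.mul_sum (a := Finset.univ.sup' _ _)]
    refine mul_le_mul_of_nonneg_left (Finset.sum_le_sum (fun k _ => ?_)) (by norm_num)
    exact mul_le_mul_of_nonneg_right (Finset.le_sup' (y τ) (Finset.mem_univ k)) (sq_nonneg _)
  · refine monotoneOn_of_hasDerivWithinAt_nonneg (convex_Ici 0)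
      (fun τ hτ => (hD τ hτ).continuousAt.continuousWithinAt)
      (fun τ hτ => (hD τ (interior_subset hτ)).hasDerivWithinAt)
      (fun τ hτ => hN τ (interior_subset hτ))
end

section
/- Let y : [0,∞) → Δ^{K−1} be a differentiable solution of the collision flow dy/dτ = y ⊙ y − s₂(y)·y. For indices i ≠ j set δ_{ij}(τ) := y_i(τ) − y_j(τ). Then δ_{ij}′(τ) = δ_{ij}(τ)·(y_i(τ) + y_j(τ) − s₂(τ)), hence δ_{ij}(τ) = δ_{ij}(0)·exp(∫₀^τ (y_i + y_j − s₂) du); in particular the sign of y_i(τ) − y_j(τ) equals the sign of y_i(0) − y_j(0) for all τ ≥ 0, and if m is the unique index maximizing y_i(0) then y_m(τ) > y_i(τ) for all i ≠ m and all τ ≥ 0. -/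
open Finset

/-- Order preservation along the collision flow
`dy/dτ = y ⊙ y − s₂(y)·y`: for `i ≠ j`, `δ_{ij} := y_i − y_j` satisfies
`δ_{ij}′ = δ_{ij}(y_i + y_j − s₂)`, hence
`δ_{ij}(τ) = δ_{ij}(0)·exp(∫₀^τ (y_i + y_j − s₂) du)`;
in particular the sign of `y_i − y_j` is preserved, and the unique initial
maximizer remains the strict maximizer for all `τ ≥ 0`. -/
theorem collision_flow_order_preservation {K : ℕ} (hK : 0 < K)
    (y : ℝ → Fin K → ℝ)
    (hsimp : ∀ τ ≥ (0:ℝ), y τ ∈ stdSimplex ℝ (Fin K))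
    (hflow : ∀ τ ≥ (0:ℝ), ∀ i, HasDerivAt (fun u => y u i)
      (y τ i * y τ i - (∑ k, y τ k ^ 2) * y τ i) τ) :
    (∀ i j : Fin K, i ≠ j → ∀ τ ≥ (0:ℝ),
      HasDerivAt (fun u => y u i - y u j)
        ((y τ i - y τ j) * (y τ i + y τ j - ∑ k, y τ k ^ 2)) τ) ∧
    (∀ i j : Fin K, i ≠ j → ∀ τ ≥ (0:ℝ),
      y τ i - y τ j = (y 0 i - y 0 j) *
        Real.exp (∫ u in (0:ℝ)..τ, (y u i + y u j - ∑ k, y u k ^ 2))) ∧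
    (∀ i j : Fin K, i ≠ j → ∀ τ ≥ (0:ℝ),
      Real.sign (y τ i - y τ j) = Real.sign (y 0 i - y 0 j)) ∧
    (∀ m : Fin K, (∀ i, i ≠ m → y 0 i < y 0 m) →
      ∀ τ ≥ (0:ℝ), ∀ i, i ≠ m → y τ i < y τ m) := by
  have hd : ∀ i j : Fin K, ∀ τ ≥ (0:ℝ),
      HasDerivAt (fun u => y u i - y u j)
        ((y τ i - y τ j) * (y τ i + y τ j - ∑ k, y τ k ^ 2)) τ := by
    intro i j τ hτ
    have h := (hflow τ hτ i).sub (hflow τ hτ j)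
    refine h.congr_deriv ?_
    ring
  have hc : ∀ i : Fin K, Continuous (fun u : ℝ => y (max u 0) i) := by
    intro i
    rw [continuous_iff_continuousAt]
    intro u
    have h1 : ContinuousAt (fun u => y u i) (max u 0) :=
      (hflow (max u 0) (le_max_right _ _) i).continuousAt
    have h2 : ContinuousAt (fun u : ℝ => max u 0) u := by fun_prop
    exact ContinuousAt.comp (f := fun u : ℝ => max u 0) (g := fun u => y u i) h1 h2
  have hint : ∀ i j : Fin K, ∀ τ ≥ (0:ℝ),
      y τ i - y τ j = (y 0 i - y 0 j) *
        Real.exp (∫ u in (0:ℝ)..τ, (y u i + y u j - ∑ k, y u k ^ 2)) := by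
    intro i j τ hτ
    let G : ℝ → ℝ := fun u =>
      y (max u 0) i + y (max u 0) j - ∑ k, y (max u 0) k ^ 2
    have hG : Continuous G :=
      ((hc i).add (hc j)).sub (continuous_finsetSum _ fun k _ => (hc k).pow 2)
    have hEq : ∫ u in (0:ℝ)..τ, (y u i + y u j - ∑ k, y u k ^ 2)
        = ∫ u in (0:ℝ)..τ, G u := by
      apply intervalIntegral.integral_congr
      intro u hu
      rw [Set.uIcc_of_le hτ] at hu
      simp only [G, max_eq_left hu.1]
    have hF : ∀ t ≥ (0:ℝ), HasDerivAt
        (fun t => (y t i - y t j) * Real.exp (-∫ u in (0:ℝ)..t, G u)) 0 t := by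
      intro t ht
      have h1 : HasDerivAt (fun t => ∫ u in (0:ℝ)..t, G u) (G t) t :=
        intervalIntegral.integral_hasDerivAt_right (hG.intervalIntegrable _ _)
          (hG.stronglyMeasurableAtFilter _ _) hG.continuousAt
      refine ((hd i j t ht).mul h1.neg.exp).congr_deriv ?_
      simp only [G, max_eq_left ht]
      ring
    have hk := constant_of_has_deriv_right_zero (a := 0) (b := τ)
      (fun t ht => (hF t ht.1).continuousAt.continuousWithinAt)
      (fun t ht => (hF t ht.1).hasDerivWithinAt) τ ⟨hτ, le_rfl⟩
    simp only [intervalIntegral.integral_same, neg_zero, Real.exp_zero, mul_one] at hk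
    rw [hEq, ← hk, mul_assoc, ← Real.exp_add]
    simp
  refine ⟨fun i j _ => hd i j, fun i j _ => hint i j, ?_, ?_⟩
  · intro i j _ τ hτ
    rw [hint i j τ hτ]
    have he := Real.exp_pos (∫ u in (0:ℝ)..τ, (y u i + y u j - ∑ k, y u k ^ 2))
    rcases lt_trichotomy (y 0 i - y 0 j) 0 with h | h | h
    · rw [Real.sign_of_neg h, Real.sign_of_neg (mul_neg_of_neg_of_pos h he)]
    · rw [h, zero_mul]
    · rw [Real.sign_of_pos h, Real.sign_of_pos (mul_pos h he)]
  · intro m hm τ hτ i hi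
    have h := hint m i τ hτ
    have := mul_pos (sub_pos.2 (hm i hi))
      (Real.exp_pos (∫ u in (0:ℝ)..τ, (y u m + y u i - ∑ k, y u k ^ 2)))
    linarith
end

section
/- Let κ : [0,∞) → ℝ be continuous and let y : [0,∞) → Δ^{K−1} be a differentiable solution of dy/dt = κ(t)·(y ⊙ y − s₂(y)·y). Define Φ(y) := (1/2)·Σ_i y_i². Then for all t, d/dt Φ(y(t)) = κ(t)·(s₃(t) − s₂(t)²) = κ(t)·Σ_i y_i(t)·(y_i(t) − s₂(t))², where s₂ = Σ_i y_i² and s₃ = Σ_i y_i³. In particular, if κ(t) ≥ 0 for all t then Φ(y(t)) is nondecreasing, and at any time t the derivative vanishes if and only if κ(t) = 0 or y(t) is uniform on its support. -/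
open Finset

theorem cf_identity {K : ℕ} (x : Fin K → ℝ) (h1 : ∑ k, x k = 1) :
    (∑ k, x k ^ 3) - (∑ k, x k ^ 2) ^ 2 = ∑ k, x k * (x k - ∑ j, x j ^ 2) ^ 2 := by
  generalize hs : ∑ j, x j ^ 2 = s
  have h : ∀ k, x k * (x k - s) ^ 2 = x k ^ 3 - 2 * s * x k ^ 2 + s ^ 2 * x k := fun k => by ring
  simp only [h, Finset.sum_add_distrib, Finset.sum_sub_distrib, ← Finset.mul_sum, h1, hs]
  ring

theorem cf_zero_iff {K : ℕ} (x : Fin K → ℝ) (h0 : ∀ k, 0 ≤ x k) (h1 : ∑ k, x k = 1) :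
    ∑ k, x k * (x k - ∑ j, x j ^ 2) ^ 2 = 0 ↔
      ∃ S : Finset (Fin K), S.Nonempty ∧
          (∀ i ∈ S, x i = 1 / (S.card : ℝ)) ∧ ∀ i ∉ S, x i = 0 := by
  constructor
  · intro h
    rw [Finset.sum_eq_zero_iff_of_nonneg
      (fun i _ => mul_nonneg (h0 i) (sq_nonneg _))] at h
    generalize (∑ j, x j ^ 2) = s at h
    have hS : ∀ i ∈ Finset.univ.filter (fun i => x i ≠ 0), x i = s := by
      intro i hi
      have h2 := h i (Finset.mem_univ i)
      have h3 : x i ≠ 0 := by simpa using hi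
      have h4 : x i - s = 0 := by simpa [h3] using h2
      linarith
    have hsum : ((Finset.univ.filter (fun i => x i ≠ 0)).card : ℝ) * s = 1 := by
      rw [← h1, ← Finset.sum_filter_ne_zero, Finset.sum_congr rfl hS]
      simp
    refine ⟨Finset.univ.filter (fun i => x i ≠ 0), ?_, ?_, ?_⟩
    · rw [Finset.nonempty_iff_ne_empty]
      intro he
      rw [he] at hsum
      simp at hsum
    · intro i hi
      rw [hS i hi]
      exact eq_one_div_of_mul_eq_one_right hsum
    · intro i hi
      simpa using hi
  · rintro ⟨S, hne, hS, hn⟩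
    have hc : (S.card : ℝ) ≠ 0 := by exact_mod_cast hne.card_pos.ne'
    have hs : ∑ j, x j ^ 2 = 1 / (S.card : ℝ) := by
      rw [← Finset.sum_subset (Finset.subset_univ S) (fun i _ hi => by rw [hn i hi]; ring),
        Finset.sum_congr rfl (fun i hi => by rw [hS i hi])]
      simp
      field_simp
    rw [hs]
    refine Finset.sum_eq_zero fun i _ => ?_
    by_cases hi : i ∈ S
    · rw [hS i hi]; ring
    · rw [hn i hi]; ring

/-- Lyapunov structure of the time-rescaled collision flow
`dy/dt = κ(t)·(y ⊙ y − s₂(y)·y)` with potential `Φ(y) = (1/2)Σ y_i²`: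
`d/dt Φ(y(t)) = κ(t)(s₃ − s₂²) = κ(t)·Σ y_i(y_i − s₂)²`; if `κ ≥ 0` then
`Φ(y(t))` is nondecreasing (on `[0,∞)`); and at any time the derivative
vanishes iff `κ(t) = 0` or `y(t)` is uniform on its support. -/
theorem collision_flow_lyapunov {K : ℕ} (hK : 0 < K)
    (κ : ℝ → ℝ) (hκ : Continuous κ)
    (y : ℝ → Fin K → ℝ)
    (hsimp : ∀ t ≥ (0:ℝ), y t ∈ stdSimplex ℝ (Fin K))
    (hflow : ∀ t ≥ (0:ℝ), ∀ i, HasDerivAt (fun u => y u i)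
      (κ t * (y t i * y t i - (∑ k, y t k ^ 2) * y t i)) t) :
    (∀ t ≥ (0:ℝ), HasDerivAt (fun u => (1 / 2) * ∑ k, y u k ^ 2)
      (κ t * ((∑ k, y t k ^ 3) - (∑ k, y t k ^ 2) ^ 2)) t) ∧
    (∀ t ≥ (0:ℝ), κ t * ((∑ k, y t k ^ 3) - (∑ k, y t k ^ 2) ^ 2) =
      κ t * ∑ k, y t k * (y t k - ∑ j, y t j ^ 2) ^ 2) ∧
    ((∀ t ≥ (0:ℝ), 0 ≤ κ t) →
      MonotoneOn (fun t => (1 / 2) * ∑ k, y t k ^ 2) (Set.Ici 0)) ∧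
    (∀ t ≥ (0:ℝ),
      (κ t * ((∑ k, y t k ^ 3) - (∑ k, y t k ^ 2) ^ 2) = 0 ↔
        κ t = 0 ∨ ∃ S : Finset (Fin K), S.Nonempty ∧
          (∀ i ∈ S, y t i = 1 / (S.card : ℝ)) ∧ ∀ i ∉ S, y t i = 0)) := by
  have hD : ∀ t ≥ (0:ℝ), HasDerivAt (fun u => (1 / 2) * ∑ k, y u k ^ 2)
      (κ t * ((∑ k, y t k ^ 3) - (∑ k, y t k ^ 2) ^ 2)) t := by
    intro t ht
    have h := (HasDerivAt.fun_sum (u := Finset.univ)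
      (fun i _ => (hflow t ht i).fun_pow 2)).const_mul (1 / 2 : ℝ)
    refine h.congr_deriv ?_
    generalize hs : ∑ k, y t k ^ 2 = s
    have h : ∀ i, ((2 : ℕ) : ℝ) * y t i ^ (2 - 1) * (κ t * (y t i * y t i - s * y t i))
        = 2 * κ t * y t i ^ 3 - 2 * κ t * s * y t i ^ 2 := fun i => by
      norm_num
      ring
    simp only [h, Finset.sum_sub_distrib, ← Finset.mul_sum, hs]
    ring
  have hI : ∀ t ≥ (0:ℝ), (∑ k, y t k ^ 3) - (∑ k, y t k ^ 2) ^ 2 =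
      ∑ k, y t k * (y t k - ∑ j, y t j ^ 2) ^ 2 :=
    fun t ht => cf_identity (y t) (hsimp t ht).2
  refine ⟨hD, fun t ht => by rw [hI t ht], fun hk => ?_, fun t ht => ?_⟩
  · refine monotoneOn_of_hasDerivWithinAt_nonneg (convex_Ici 0)
      (fun t ht => (hD t ht).continuousAt.continuousWithinAt)
      (fun t ht => (hD t (interior_subset ht)).hasDerivWithinAt) ?_
    intro t ht
    have ht' : (0:ℝ) ≤ t := interior_subset ht
    rw [hI t ht']
    exact mul_nonneg (hk t ht') (Finset.sum_nonneg fun i _ =>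
      mul_nonneg ((hsimp t ht').1 i) (sq_nonneg _))
  · rw [mul_eq_zero, hI t ht, cf_zero_iff (y t) (hsimp t ht).1 (hsimp t ht).2]
end

section
/- Let β > 0, ℓ_ref ∈ ℝ, and let h : (0,1) → ℝ be continuous and bounded. Define p_ref := e^{ℓ_ref}/(1 + e^{ℓ_ref}) ∈ (0,1). Then: (i) there exists p* ∈ (0,1) with β·(log(p*/(1−p*)) − ℓ_ref) = h(p*); (ii) if moreover the map p ↦ β·log(p/(1−p)) − h(p) is strictly increasing on (0,1), then p* is unique; (iii) any such solution p* satisfies p* > p_ref when h(p*) > 0, p* < p_ref when h(p*) < 0, and p* = p_ref when h ≡ 0. In particular, if h > 0 everywhere on (0,1) (the anti-learning case J < 0 of the KL-regularized GRPO bad-mass ODE) then every equilibrium satisfies p_ref < p* < 1, so the KL penalty prevents collapse to p = 1. -/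
/-- The logistic function. -/
noncomputable def sgm (l : ℝ) : ℝ := Real.exp l / (1 + Real.exp l)

lemma sgm_mem (l : ℝ) : sgm l ∈ Set.Ioo (0:ℝ) 1 := by
  have := Real.exp_pos l
  unfold sgm
  refine ⟨by positivity, ?_⟩
  rw [div_lt_one (by positivity)]
  linarith

lemma logit_sgm (l : ℝ) : Real.log (sgm l / (1 - sgm l)) = l := by
  have := Real.exp_pos l
  have e : sgm l / (1 - sgm l) = Real.exp l := by
    have h1 : 1 - sgm l = 1 / (1 + Real.exp l) := by
      unfold sgm
      field_simp
      ring
    rw [h1]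
    unfold sgm
    field_simp
  rw [e, Real.log_exp]

lemma sgm_logit (p : ℝ) (hp : p ∈ Set.Ioo (0:ℝ) 1) :
    sgm (Real.log (p / (1 - p))) = p := by
  have h0 := hp.1
  have h1 : 0 < 1 - p := by linarith [hp.2]
  unfold sgm
  rw [Real.exp_log (by positivity)]
  field_simp
  ring

lemma sgm_strictMono : StrictMono sgm := by
  intro a b hab
  have ha := Real.exp_pos a
  have hb := Real.exp_pos b
  have := Real.exp_lt_exp.2 hab
  unfold sgm
  rw [div_lt_div_iff₀ (by positivity) (by positivity)]
  nlinarith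

lemma sgm_continuous : Continuous sgm := by
  unfold sgm
  refine Real.continuous_exp.div (by fun_prop) ?_
  intro x
  have := Real.exp_pos x
  positivity

/-- KL-regularized interior equilibria. Let `β > 0`,
`ℓ_ref ∈ ℝ`, `h : (0,1) → ℝ` continuous and bounded, and
`p_ref = e^{ℓ_ref}/(1+e^{ℓ_ref})`. Then:
(i) there exists `p* ∈ (0,1)` with `β(log(p*/(1−p*)) − ℓ_ref) = h(p*)`;
(ii) if `p ↦ β·log(p/(1−p)) − h(p)` is strictly increasing on `(0,1)` then the
solution is unique;
(iii) any solution satisfies `p* > p_ref` when `h(p*) > 0`, `p* < p_ref` when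
`h(p*) < 0`, and `p* = p_ref` when `h ≡ 0`;
(iv) if `h > 0` on `(0,1)` (the anti-learning case `J < 0`), every equilibrium
satisfies `p_ref < p* < 1`, so the KL penalty prevents collapse to `p = 1`. -/
theorem kl_interior_equilibrium (β ℓref : ℝ) (hβ : 0 < β)
    (h : ℝ → ℝ) (hcont : ContinuousOn h (Set.Ioo 0 1))
    (hbdd : ∃ C : ℝ, ∀ x ∈ Set.Ioo (0:ℝ) 1, |h x| ≤ C)
    (pref : ℝ) (hpref : pref = Real.exp ℓref / (1 + Real.exp ℓref)) :
    (∃ pstar ∈ Set.Ioo (0:ℝ) 1,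
      β * (Real.log (pstar / (1 - pstar)) - ℓref) = h pstar) ∧
    (StrictMonoOn (fun x => β * Real.log (x / (1 - x)) - h x) (Set.Ioo 0 1) →
      ∀ p₁ ∈ Set.Ioo (0:ℝ) 1, ∀ p₂ ∈ Set.Ioo (0:ℝ) 1,
        β * (Real.log (p₁ / (1 - p₁)) - ℓref) = h p₁ →
        β * (Real.log (p₂ / (1 - p₂)) - ℓref) = h p₂ → p₁ = p₂) ∧
    (∀ pstar ∈ Set.Ioo (0:ℝ) 1,
      β * (Real.log (pstar / (1 - pstar)) - ℓref) = h pstar →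
      (0 < h pstar → pref < pstar) ∧
      (h pstar < 0 → pstar < pref) ∧
      ((∀ x ∈ Set.Ioo (0:ℝ) 1, h x = 0) → pstar = pref)) ∧
    ((∀ x ∈ Set.Ioo (0:ℝ) 1, 0 < h x) →
      ∀ pstar ∈ Set.Ioo (0:ℝ) 1,
        β * (Real.log (pstar / (1 - pstar)) - ℓref) = h pstar →
        pref < pstar ∧ pstar < 1) := by
  have key : ∀ pstar ∈ Set.Ioo (0:ℝ) 1,
      β * (Real.log (pstar / (1 - pstar)) - ℓref) = h pstar →
      (0 < h pstar → pref < pstar) ∧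
      (h pstar < 0 → pstar < pref) ∧
      ((∀ x ∈ Set.Ioo (0:ℝ) 1, h x = 0) → pstar = pref) := by
    intro p hp he
    have hr : pref = sgm ℓref := hpref
    have hs := sgm_logit p hp
    rw [hr]
    refine ⟨fun hh => ?_, fun hh => ?_, fun hh => ?_⟩
    · rw [← he] at hh
      have h1 := pos_of_mul_pos_right hh hβ.le
      have h2 : ℓref < Real.log (p / (1 - p)) := by linarith
      have h3 := sgm_strictMono h2
      rwa [hs] at h3
    · rw [← he] at hh
      have h2 : Real.log (p / (1 - p)) < ℓref := by
        by_contra hc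
        push Not at hc
        have := mul_nonneg hβ.le (sub_nonneg.2 hc)
        linarith
      have h3 := sgm_strictMono h2
      rwa [hs] at h3
    · rw [hh p hp] at he
      have h1 := (mul_eq_zero.1 he).resolve_left hβ.ne'
      have h2 : Real.log (p / (1 - p)) = ℓref := by linarith
      rw [← h2, hs]
  refine ⟨?_, ?_, key, ?_⟩
  · obtain ⟨C, hC⟩ := hbdd
    have hC0 : 0 ≤ C := (abs_nonneg _).trans (hC _ (sgm_mem 0))
    have hg : Continuous (fun l => β * (l - ℓref) - h (sgm l)) := by
      have : Continuous (fun l => h (sgm l)) :=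
        hcont.comp_continuous sgm_continuous sgm_mem
      exact Continuous.sub (by fun_prop) this
    have ha : β * ((ℓref - C / β) - ℓref) - h (sgm (ℓref - C / β)) ≤ 0 := by
      have h1 := (abs_le.1 (hC _ (sgm_mem (ℓref - C / β)))).1
      have h2 : β * ((ℓref - C / β) - ℓref) = -C := by field_simp; ring
      linarith
    have hb : 0 ≤ β * ((ℓref + C / β) - ℓref) - h (sgm (ℓref + C / β)) := by
      have h1 := (abs_le.1 (hC _ (sgm_mem (ℓref + C / β)))).2
      have h2 : β * ((ℓref + C / β) - ℓref) = C := by field_simp; ring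
      linarith
    obtain ⟨l, hl⟩ := mem_range_of_exists_le_of_exists_ge hg ⟨_, ha⟩ ⟨_, hb⟩
    refine ⟨sgm l, sgm_mem l, ?_⟩
    rw [logit_sgm]
    simp only at hl
    linarith
  · intro hm p₁ hp₁ p₂ hp₂ h1 h2
    apply hm.injOn hp₁ hp₂
    simp only
    linarith
  · intro hpos p hp he
    exact ⟨(key p hp he).1 (hpos p hp), hp.2⟩
end

section
/- Let K, M ≥ 1, let p ∈ (0,1), y ∈ Δ^{K−1}, z ∈ Δ^{M−1}, and define 𝐩 ∈ Δ^{K+M−1} by 𝐩_j = (1−p)·y_j for 1 ≤ j ≤ K and 𝐩_{K+m} = p·z_m for 1 ≤ m ≤ M. Let a_g, a_b ∈ ℝ and let A ∈ ℝ^{K+M} have A_j = a_g for the first K (good) coordinates and A_{K+m} = a_b for the last M (bad) coordinates, and set Δr := a_b − a_g. Then with 𝔍(𝐩) = Diag(𝐩) − 𝐩𝐩ᵀ: (i) the components of the one-step field are (𝔍(𝐩)A)_j = −(1−p)·p·Δr·y_j for good indices j and (𝔍(𝐩)A)_{K+m} = p·(1−p)·Δr·z_m for bad indices m; (ii) the total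 drift of the bad mass under the squared-Jacobian (GRPO) field satisfies the exact identity Σ_{m=1}^M (𝔍(𝐩)²·A)_{K+m} = Δr·[p(1−p)]²·(∥y∥₂² + ∥z∥₂²). -/
open Finset

/-- Block-symmetric GRPO field on the composite policy
`𝐩 = ((1−p)y, pz)` with advantage vector `A = (a_g,…,a_g, a_b,…,a_b)` and
`Δr = a_b − a_g`, `𝔍(𝐩) = Diag(𝐩) − 𝐩𝐩ᵀ`:
(i) `(𝔍(𝐩)A)_j = −(1−p)p·Δr·y_j` on good indices and
`(𝔍(𝐩)A)_{K+m} = p(1−p)·Δr·z_m` on bad indices;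
(ii) the total bad-mass drift under the squared-Jacobian (GRPO) field is
`Σ_m (𝔍(𝐩)²A)_{K+m} = Δr·[p(1−p)]²·(∥y∥₂² + ∥z∥₂²)`. -/
theorem grpo_block_field_identities {K M : ℕ} (hK : 1 ≤ K) (hM : 1 ≤ M)
    (p : ℝ) (hp : p ∈ Set.Ioo (0:ℝ) 1)
    (y : Fin K → ℝ) (hy : y ∈ stdSimplex ℝ (Fin K))
    (z : Fin M → ℝ) (hz : z ∈ stdSimplex ℝ (Fin M))
    (ag ab Δr : ℝ) (hΔr : Δr = ab - ag)
    (P : Fin (K + M) → ℝ)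
    (hP : P = Fin.append (fun j => (1 - p) * y j) (fun m => p * z m))
    (A : Fin (K + M) → ℝ)
    (hA : A = Fin.append (fun _ : Fin K => ag) (fun _ : Fin M => ab))
    (Jmat : Matrix (Fin (K + M)) (Fin (K + M)) ℝ)
    (hJ : Jmat = Matrix.diagonal P - Matrix.vecMulVec P P) :
    (∀ j : Fin K, Jmat.mulVec A (Fin.castAdd M j) = -((1 - p) * p * Δr * y j)) ∧
    (∀ m : Fin M, Jmat.mulVec A (Fin.natAdd K m) = p * (1 - p) * Δr * z m) ∧
    (∑ m : Fin M, (Jmat * Jmat).mulVec A (Fin.natAdd K m) =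
      Δr * (p * (1 - p)) ^ 2 * ((∑ j, y j ^ 2) + ∑ m, z m ^ 2)) := by
  have key : ∀ (v : Fin (K + M) → ℝ) (i : Fin (K + M)),
      Jmat.mulVec v i = P i * v i - P i * ∑ k, P k * v k := by
    intro v i
    rw [hJ, Matrix.sub_mulVec, Pi.sub_apply, Matrix.mulVec_diagonal]
    congr 1
    simp only [Matrix.mulVec, dotProduct, Matrix.vecMulVec_apply, Finset.mul_sum, mul_assoc]
  have hy1 : ∑ j, y j = 1 := hy.2
  have hz1 : ∑ m, z m = 1 := hz.2
  have hPg : ∀ j : Fin K, P (Fin.castAdd M j) = (1 - p) * y j := by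
    intro j; rw [hP, Fin.append_left]
  have hPb : ∀ m : Fin M, P (Fin.natAdd K m) = p * z m := by
    intro m; rw [hP, Fin.append_right]
  have hAg : ∀ j : Fin K, A (Fin.castAdd M j) = ag := by
    intro j; rw [hA, Fin.append_left]
  have hAb : ∀ m : Fin M, A (Fin.natAdd K m) = ab := by
    intro m; rw [hA, Fin.append_right]
  have hS : ∑ k, P k * A k = (1 - p) * ag + p * ab := by
    rw [Fin.sum_univ_add]
    simp only [hPg, hPb, hAg, hAb]
    rw [← Finset.sum_mul, ← Finset.sum_mul, ← Finset.mul_sum, ← Finset.mul_sum, hy1, hz1]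
    ring
  have h1 : ∀ j : Fin K, Jmat.mulVec A (Fin.castAdd M j) = -((1 - p) * p * Δr * y j) := by
    intro j
    rw [key, hS, hPg, hAg, hΔr]; ring
  have h2 : ∀ m : Fin M, Jmat.mulVec A (Fin.natAdd K m) = p * (1 - p) * Δr * z m := by
    intro m
    rw [key, hS, hPb, hAb, hΔr]; ring
  refine ⟨h1, h2, ?_⟩
  have hT : ∑ k, P k * Jmat.mulVec A k =
      -((1 - p) ^ 2 * p * Δr) * ∑ j, y j ^ 2 + p ^ 2 * (1 - p) * Δr * ∑ m, z m ^ 2 := by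
    rw [Fin.sum_univ_add, Finset.mul_sum, Finset.mul_sum]
    congr 1
    · refine Finset.sum_congr rfl fun j _ => ?_
      rw [hPg, h1]; ring
    · refine Finset.sum_congr rfl fun m _ => ?_
      rw [hPb, h2]; ring
  have hU : ∀ m : Fin M, (Jmat * Jmat).mulVec A (Fin.natAdd K m) =
      p ^ 2 * (1 - p) * Δr * z m ^ 2 - z m * (p * ∑ k, P k * Jmat.mulVec A k) := by
    intro m
    rw [← Matrix.mulVec_mulVec, key, hPb, h2]; ring
  simp only [hU]
  rw [Finset.sum_sub_distrib, ← Finset.mul_sum, ← Finset.sum_mul, hz1, hT]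
  ring
end
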